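/- Let λ be a regular cardinal with λ > ℶ_ω, let (T, <ᵀ) be a tree in which every chain has cardinality < λ, and let ⟨z_i : i < λ⟩ be a sequence of nodes of T such that i < j < λ implies that the level of z_i is strictly less than the level of z_j. Assume there is no set A ⊆ λ with |A| = ℶ_ω such that the nodes {z_i : i ∈ A} are pairwise <ᵀ-incomparable. Then for every j < λ there are i₀, i₁, i₂ with j < i₀ < i₁ < i₂ < λ such that z_{i₀} <ᵀ z_{i₁}, z_{i₀} <ᵀ z_{i₂}, and z_{i₁}, z_{i₂} are <ᵀ-incomparable. -/

import Mathlib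

/-!
Suppose that the conclusion fails above `j`. Then for every index `m` with `j < m < λ` the nodes
`z k` (`j < k < λ`) lying above `z m` form a chain, so there are fewer than `λ` of them. The
indices `m` for which `z m` is minimal among the nodes `z k` with `j < k < λ` form an antichain,
so there are fewer than `ℶ_ω < λ` of them. By induction on the index (`z k < z i` forces `k < i`,
since the levels increase), every `z i` lies above a minimal node. Hence the interval `(j, λ)` is
a union of fewer than `λ` sets, each of cardinality `< λ`, contradicting the regularity of `λ`.
The only property of `ℶ_ω` that is used is `ℶ_ω < λ`.
-/

open Cardinal

/-- The level of a node `x` of a tree: the order type of its set of predecessors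
(which is well-ordered by the tree order). -/
noncomputable def levelT {T : Type u} [PartialOrder T]
    [inst : ∀ x : T, IsWellOrder {y : T // y < x} fun a b => (a : T) < (b : T)]
    (x : T) : Ordinal.{u} :=
  @Ordinal.type {y : T // y < x} (fun a b => (a : T) < (b : T)) (inst x)

theorem levelT_mono {T : Type u} [PartialOrder T]
    [inst : ∀ x : T, IsWellOrder {y : T // y < x} fun a b => (a : T) < (b : T)]
    {x y : T} (h : x ≤ y) : levelT x ≤ levelT y := by
  unfold levelT
  exact @RelEmbedding.ordinal_type_le _ _ _ _ (inst x) (inst y)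
    ⟨⟨fun a => ⟨a.1, a.2.trans_le h⟩, fun a b hab => Subtype.ext (congrArg Subtype.val hab :)⟩,
      Iff.rfl⟩

/-- Let `λ > ℶ_ω` be regular, `T` a tree all of whose chains have cardinality `< λ`, and
`⟨z_i : i < λ⟩` a sequence of nodes whose levels are strictly increasing with `i`.  If
there is no `A ⊆ λ` of cardinality `ℶ_ω` with `{z_i : i ∈ A}` pairwise incomparable, then
for every `j < λ` there are `j < i₀ < i₁ < i₂ < λ` with `z_{i₀} <ᵀ z_{i₁}`,
`z_{i₀} <ᵀ z_{i₂}`, and `z_{i₁}, z_{i₂}` incomparable. -/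
theorem stmt14 {T : Type u} [PartialOrder T]
    [inst : ∀ x : T, IsWellOrder {y : T // y < x} fun a b => (a : T) < (b : T)]
    (lam : Cardinal.{u}) (hreg : lam.IsRegular) (hbeth : beth Ordinal.omega0 < lam)
    (hchain : ∀ C : Set T, IsChain (· ≤ ·) C → #C < lam)
    (z : Ordinal.{u} → T)
    (hlev : ∀ i j : Ordinal, i < j → j < lam.ord → levelT (z i) < levelT (z j))
    (hnoanti : ¬ ∃ A : Set Ordinal.{u}, A ⊆ Set.Iio lam.ord ∧
      #A = beth Ordinal.omega0 ∧
      ∀ i ∈ A, ∀ j ∈ A, i ≠ j → ¬ z i ≤ z j ∧ ¬ z j ≤ z i) :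
    ∀ j < lam.ord, ∃ i₀ i₁ i₂ : Ordinal,
      j < i₀ ∧ i₀ < i₁ ∧ i₁ < i₂ ∧ i₂ < lam.ord ∧
      z i₀ < z i₁ ∧ z i₀ < z i₂ ∧ ¬ z i₁ ≤ z i₂ ∧ ¬ z i₂ ≤ z i₁ := by
  intro j hj
  by_contra hcon
  have hle : ∀ i k, i < lam.ord → z i ≤ z k → i ≤ k := by
    intro i k hi h
    by_contra hki
    exact absurd (hlev k i (not_le.1 hki) hi) (not_lt.2 (levelT_mono h))
  have hinj : ∀ i k, i < lam.ord → k < lam.ord → z i = z k → i = k := fun i k hi hk h =>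
    le_antisymm (hle i k hi h.le) (hle k i hk h.ge)
  have hlt : ∀ i k, i < lam.ord → z i < z k → i < k := fun i k hi h =>
    (hle i k hi h.le).lt_of_ne (fun e => h.ne (congrArg z e))
  let C : Ordinal.{u} → Set Ordinal.{u} := fun m => {k | k ∈ Set.Ioo j lam.ord ∧ z m ≤ z k}
  let M : Set Ordinal.{u} :=
    {m | m ∈ Set.Ioo j lam.ord ∧ ∀ k ∈ Set.Ioo j lam.ord, ¬ z k < z m}
  have hC : ∀ m ∈ Set.Ioo j lam.ord, #(C m) < lift.{u+1} lam := by
    intro m hm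
    have hcomp : ∀ a ∈ C m, ∀ b ∈ C m, a < b → z a ≤ z b ∨ z b ≤ z a := by
      intro a ha b hb hab
      by_contra h
      obtain ⟨h1, h2⟩ := not_or.1 h
      have ham : z m < z a := ha.2.lt_of_not_ge fun h' => h1 (h'.trans hb.2)
      have hbm : z m < z b := hb.2.lt_of_not_ge fun h' => h2 (h'.trans ha.2)
      exact hcon ⟨m, a, b, hm.1, hlt m a hm.2 ham, hab, hb.1.2, ham, hbm, h1, h2⟩
    have hch : IsChain (· ≤ ·) (z '' C m) := by
      rintro _ ⟨a, ha, rfl⟩ _ ⟨b, hb, rfl⟩ hab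
      rcases lt_trichotomy a b with h | h | h
      · exact hcomp a ha b hb h
      · exact absurd (congrArg z h) hab
      · exact (hcomp b hb a ha h).symm
    have h1 := mk_image_eq_of_injOn_lift z (C m)
      (fun a ha b hb h => hinj a b ha.1.2 hb.1.2 h)
    have h2 := lift_lt.{u, u+1}.2 (hchain _ hch)
    rwa [h1, lift_id'.{u, u+1}] at h2
  have hbeth' : beth.{u+1} Ordinal.omega0 < lift.{u+1} lam := by
    have h := lift_lt.{u, u+1}.2 hbeth
    rwa [lift_beth, Ordinal.lift_omega0] at h
  have hM : #M < lift.{u+1} lam := by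
    refine lt_trans (lt_of_not_ge fun h => ?_) hbeth'
    obtain ⟨A, hAM, hA⟩ := le_mk_iff_exists_subset.1 h
    have key : ∀ a ∈ A, ∀ b ∈ A, a ≠ b → ¬ z a ≤ z b := fun a ha b hb hab hz =>
      (hAM hb).2 a (hAM ha).1
        (hz.lt_of_ne fun e => hab (hinj a b (hAM ha).1.2 (hAM hb).1.2 e))
    exact hnoanti ⟨A, fun a ha => (hAM ha).1.2, hA,
      fun a ha b hb hab => ⟨key a ha b hb hab, key b hb a ha hab.symm⟩⟩
  have hcov : ∀ i ∈ Set.Ioo j lam.ord, ∃ m ∈ M, i ∈ C m := by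
    intro i
    induction i using WellFoundedLT.induction with
    | ind i ih =>
      intro hi
      by_cases h : ∀ k ∈ Set.Ioo j lam.ord, ¬ z k < z i
      · exact ⟨i, ⟨hi, h⟩, hi, le_rfl⟩
      · push Not at h
        obtain ⟨k, hk, hki⟩ := h
        obtain ⟨m, hm, hkm⟩ := ih k (hlt k i hk.2 hki) hk
        exact ⟨m, hm, hi, hkm.2.trans hki.le⟩
  have hU : #(⋃ m ∈ M, C m : Set Ordinal.{u}) < lift.{u+1} lam :=
    (card_biUnion_lt_iff_forall_of_isRegular (t := fun m _ => C m) hreg.lift hM).2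
      fun m hm => hC m hm.1
  have hsub : Set.Iio lam.ord ⊆ Set.Iio (Order.succ j) ∪ ⋃ m ∈ M, C m := by
    intro i hi
    rcases le_or_gt i j with h | h
    · exact Or.inl (Order.lt_succ_iff.2 h)
    · obtain ⟨m, hm, him⟩ := hcov i ⟨h, hi⟩
      exact Or.inr (Set.mem_biUnion hm him)
  have hI : #(Set.Iio (Order.succ j)) < lift.{u+1} lam := by
    rw [Cardinal.mk_Iio_ordinal, lift_lt, ← lt_ord]
    exact (isSuccLimit_ord hreg.aleph0_le).succ_lt hj
  have hlast := ((mk_le_mk_of_subset hsub).trans (mk_union_le _ _)).trans_lt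
    (add_lt_of_lt hreg.lift.aleph0_le hI hU)
  rw [Cardinal.mk_Iio_ordinal, card_ord] at hlast
  exact lt_irrefl _ hlast
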